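/- arXiv:math/9606225 — 3 statements merged into one kernel-verified Lean document; each statement's English description precedes it below -/
import Mathlib

section
/- Let G be a group and let A be a nontrivial normal subgroup of G which is isomorphic, as an abstract group, to an additive subgroup of the rational numbers ℚ. Then G has a subgroup K of index at most 2 with A ≤ K such that either the abelianization of K is infinite, or A is contained in the center of K (i.e., every element of A commutes with every element of K). -/
/-- An additive map from a subgroup of `ℚ` to `ℚ` is multiplication by a rational number. -/
lemma AddSubgroup.map_mul_eq_map_mul_of_rat {B : AddSubgroup ℚ} (g : B →+ ℚ) (x y : B) :
    g x * y = g y * x := by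
  have hx : (x : ℚ) * (x : ℚ).den = (x : ℚ).num := Rat.mul_den_eq_num _
  have hy : (y : ℚ) * (y : ℚ).den = (y : ℚ).num := Rat.mul_den_eq_num _
  have hx₀ : ((x : ℚ).den : ℚ) ≠ 0 := by exact_mod_cast (x : ℚ).den_ne_zero
  have hy₀ : ((y : ℚ).den : ℚ) ≠ 0 := by exact_mod_cast (y : ℚ).den_ne_zero
  have hxy : (((x : ℚ).den : ℤ) * (y : ℚ).num) • x = (((y : ℚ).den : ℤ) * (x : ℚ).num) • y := by
    apply Subtype.ext
    simp only [AddSubgroup.coe_zsmul, zsmul_eq_mul, Int.cast_mul, Int.cast_natCast, ← hx, ← hy]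
    ring
  have hg := congrArg g hxy
  simp only [map_zsmul, zsmul_eq_mul, Int.cast_mul, Int.cast_natCast, ← hx, ← hy] at hg
  apply mul_right_cancel₀ (mul_ne_zero hx₀ hy₀)
  linear_combination hg

lemma MulEquiv.coe_toAdd_ne_zero {A : Type*} [Group A] {B : AddSubgroup ℚ}
    (e : A ≃* Multiplicative B) {a : A} (ha : a ≠ 1) : ((e a).toAdd : ℚ) ≠ 0 := by
  intro h
  apply ha
  apply e.injective
  rw [map_one]
  exact Multiplicative.toAdd.injective (Subtype.ext h)

/-- A group acts by conjugation on a nontrivial normal subgroup isomorphic to an additive subgroup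
of `ℚ` through multiplication by nonzero rationals. -/
lemma Subgroup.exists_conj_eq_mul_of_mulEquiv_rat {G : Type*} [Group G] (A : Subgroup G)
    (hA : A ≠ ⊥) [A.Normal] {B : AddSubgroup ℚ} (e : A ≃* Multiplicative B) :
    ∃ χ : G →* ℚˣ, ∀ (g : G) (a : A),
      ((e (MulAut.conjNormal g a)).toAdd : ℚ) = χ g * ((e a).toAdd : ℚ) := by
  obtain ⟨a₀, ha₀⟩ := A.ne_bot_iff_exists_ne_one.mp hA
  have h₀ : ((e a₀).toAdd : ℚ) ≠ 0 := MulEquiv.coe_toAdd_ne_zero e ha₀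
  have key (g : G) (a : A) : ((e (MulAut.conjNormal g a)).toAdd : ℚ) =
      ((e (MulAut.conjNormal g a₀)).toAdd : ℚ) / ((e a₀).toAdd : ℚ) * ((e a).toAdd : ℚ) := by
    have h := AddSubgroup.map_mul_eq_map_mul_of_rat (B.subtype.comp (AddMonoidHom.toMultiplicative.symm
      ((e.toMonoidHom.comp (MulAut.conjNormal g).toMonoidHom).comp e.symm.toMonoidHom)))
      (e a).toAdd (e a₀).toAdd
    have h' : ((e (MulAut.conjNormal g a)).toAdd : ℚ) * ((e a₀).toAdd : ℚ) =
        ((e (MulAut.conjNormal g a₀)).toAdd : ℚ) * ((e a).toAdd : ℚ) := by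
      simpa using h
    field_simp
    exact h'
  let χ : G →* ℚ :=
    { toFun := fun g => ((e (MulAut.conjNormal g a₀)).toAdd : ℚ) / ((e a₀).toAdd : ℚ)
      map_one' := by simp [h₀]
      map_mul' := fun g h => by
        rw [map_mul, MulAut.mul_apply, key g (MulAut.conjNormal h a₀), mul_div_assoc] }
  exact ⟨χ.toHomUnits, key⟩

/-- The preimage of the positive elements under a character has index at most two. -/
lemma MonoidHom.index_comap_posSubgroup {G F : Type*} [Group G] [Field F] [LinearOrder F]
    [IsStrictOrderedRing F] (χ : G →* Fˣ) :
    ((Units.posSubgroup F).comap χ).index = 1 ∨ ((Units.posSubgroup F).comap χ).index = 2 := by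
  by_cases h : ∀ g, 0 < (χ g : F)
  · left
    rw [Subgroup.index_eq_one, eq_top_iff]
    exact fun g _ => h g
  · right
    push Not at h
    obtain ⟨a, ha⟩ := h
    replace ha := ha.lt_of_ne (χ a).ne_zero
    refine Subgroup.index_eq_two_iff.mpr ⟨a, fun b => ?_⟩
    simp only [Subgroup.mem_comap, Units.mem_posSubgroup, map_mul, Units.val_mul]
    rcases (χ b).ne_zero.lt_or_gt with hb | hb
    · exact Or.inl ⟨mul_pos_of_neg_of_neg hb ha, hb.not_gt⟩
    · exact Or.inr ⟨hb, (mul_neg_of_pos_of_neg hb ha).not_gt⟩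

/-- A group with a character taking a positive value other than one has infinite
abelianization. -/
lemma Abelianization.infinite_of_pos_of_ne_one {K F : Type*} [Group K] [Field F] [LinearOrder F]
    [IsStrictOrderedRing F] (χ : K →* Fˣ) {k : K} (hpos : 0 < (χ k : F)) (hne : χ k ≠ 1) :
    Infinite (Abelianization K) := by
  refine Infinite.of_injective (fun n : ℕ => Abelianization.of k ^ n) fun m n hmn => ?_
  have h := congrArg (fun x => (Abelianization.lift χ x : F)) hmn
  simp only [map_pow, Abelianization.lift_apply_of, Units.val_pow_eq_pow_val] at h
  exact pow_right_injective₀ hpos (fun h => hne (Units.ext h)) h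

/-- If `A` is a nontrivial normal subgroup of `G` isomorphic (as an abstract group) to an
additive subgroup of `ℚ`, then `G` has a subgroup `K` of index at most 2 containing `A`
such that either the abelianization of `K` is infinite or `A` is contained in the
center of `K`. -/
theorem exists_index_two_subgroup_of_normal_rational_subgroup
    {G : Type*} [Group G] (A : Subgroup G) (hA : A ≠ ⊥) [A.Normal]
    (hiso : ∃ B : AddSubgroup ℚ, Nonempty (A ≃* Multiplicative B)) :
    ∃ K : Subgroup G, (K.index = 1 ∨ K.index = 2) ∧ A ≤ K ∧
      (Infinite (Abelianization K) ∨ ∀ a ∈ A, ∀ k ∈ K, a * k = k * a) := by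
  obtain ⟨B, ⟨e⟩⟩ := hiso
  obtain ⟨χ, hχ⟩ := A.exists_conj_eq_mul_of_mulEquiv_rat hA e
  have commute_of_eq_one (g : G) (hg : χ g = 1) (a : A) : (a : G) * g = g * a := by
    have h : MulAut.conjNormal g a = a := by
      apply e.injective
      apply Multiplicative.toAdd.injective
      apply Subtype.ext
      rw [hχ, hg, Units.val_one, one_mul]
    have h' := congrArg Subtype.val h
    rw [MulAut.conjNormal_apply, mul_inv_eq_iff_eq_mul] at h'
    exact h'.symm
  have eq_one_of_mem (a : G) (ha : a ∈ A) : χ a = 1 := by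
    obtain ⟨b, hb⟩ := A.ne_bot_iff_exists_ne_one.mp hA
    have hcomm : (⟨a, ha⟩ : A) * b = b * ⟨a, ha⟩ := by
      apply e.injective
      rw [map_mul, map_mul, mul_comm]
    have hconj : MulAut.conjNormal a b = b := by
      apply Subtype.ext
      rw [MulAut.conjNormal_apply, mul_inv_eq_iff_eq_mul]
      exact congrArg Subtype.val hcomm
    have hb₀ : ((e b).toAdd : ℚ) ≠ 0 := MulEquiv.coe_toAdd_ne_zero e hb
    have h := hχ a b
    rw [hconj] at h
    exact Units.ext (mul_right_cancel₀ hb₀ (by rw [← h, Units.val_one, one_mul]))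
  refine ⟨(Units.posSubgroup ℚ).comap χ, χ.index_comap_posSubgroup, fun a ha => ?_, ?_⟩
  · simp [eq_one_of_mem a ha]
  · by_cases h : ∀ k ∈ (Units.posSubgroup ℚ).comap χ, χ k = 1
    · exact Or.inr fun a ha k hk => commute_of_eq_one k (h k hk) ⟨a, ha⟩
    · push Not at h
      obtain ⟨k, hk, hne⟩ := h
      exact Or.inl (Abelianization.infinite_of_pos_of_ne_one
        (χ.comp (Subgroup.subtype _)) (k := ⟨k, hk⟩) hk hne)
end

section
/- Let D∞ be the infinite dihedral group (the group with presentation ⟨x, y : x² = 1, xyx = y⁻¹⟩), and let R = ⟨y⟩ be its index-two infinite cyclic subgroup. Let Q be a group and ρ : Q → D∞ a group homomorphism, and suppose there exist a group H, a surjective group homomorphism ψ from H onto the kernel of ρ, and a normal abelian subgroup A of H such that every element of H has some positive power lying in A. Then every nontrivial torsion-free subgroup G of Q contains a nontrivial subgroup G' of index at most 2 in G such that either G' has infinite abelianization or G' contains a nontrivial normal abelian subgroup. -/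
/-- The homomorphism sending rotations to `1` and reflections to `-1`. -/
def DihedralGroup.reflectionSign (n : ℕ) : DihedralGroup n →* ℤˣ where
  toFun
    | .r _ => 1
    | .sr _ => -1
  map_one' := rfl
  map_mul' := by rintro (i | i) (j | j) <;> simp

theorem DihedralGroup.reflectionSign_eq_one_iff {n : ℕ} {x : DihedralGroup n} :
    reflectionSign n x = 1 ↔ ∃ i, x = r i := by
  rcases x with i | i
  · exact ⟨fun _ => ⟨i, rfl⟩, fun _ => rfl⟩
  · exact ⟨fun h => absurd h (by decide : (-1 : ℤˣ) ≠ 1), by rintro ⟨j, hj⟩; cases hj⟩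

/-- The identification of the rotations of the infinite dihedral group with `ℤ`. -/
def DihedralGroup.rotationAngle : (reflectionSign 0).ker →* Multiplicative ℤ where
  toFun x := match x.1 with
    | .r i => Multiplicative.ofAdd (i : ℤ)
    | .sr _ => 1
  map_one' := rfl
  map_mul' := by
    rintro ⟨x, hx⟩ ⟨y, hy⟩
    obtain ⟨i, rfl⟩ := reflectionSign_eq_one_iff.1 hx
    obtain ⟨j, rfl⟩ := reflectionSign_eq_one_iff.1 hy
    rfl

theorem DihedralGroup.rotationAngle_injective : Function.Injective rotationAngle := by
  rintro ⟨x, hx⟩ ⟨y, hy⟩ h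
  obtain ⟨i, rfl⟩ := reflectionSign_eq_one_iff.1 hx
  obtain ⟨j, rfl⟩ := reflectionSign_eq_one_iff.1 hy
  exact Subtype.ext (congrArg r h)

theorem Abelianization.infinite_of_not_isOfFinOrder {K L : Type*} [Group K] [CommGroup L]
    (f : K →* L) {g : K} (hg : ¬IsOfFinOrder (f g)) : Infinite (Abelianization K) := by
  by_contra h
  rw [not_infinite_iff_finite] at h
  exact hg (by
    simpa using (lift f).isOfFinOrder (isOfFinOrder_of_finite (Abelianization.of g)))

/-- Group-theoretic skeleton of Theorem 3.2: if `ρ : Q → D∞` is a homomorphism into the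
infinite dihedral group (`DihedralGroup 0`), and there is a surjection `ψ` of a group `H`
onto `ker ρ` together with a normal abelian subgroup `A` of `H` such that every element
of `H` has a positive power in `A`, then every nontrivial torsion-free subgroup `G` of
`Q` contains a nontrivial subgroup `G'` of index at most 2 which either has infinite
abelianization or contains a nontrivial normal abelian subgroup. -/
theorem torsionFree_subgroup_has_good_finite_index_subgroup
    {Q H : Type*} [Group Q] [Group H]
    (ρ : Q →* DihedralGroup 0)
    (ψ : H →* ρ.ker) (hψ : Function.Surjective ψ)
    (A : Subgroup H) [A.Normal] (hab : ∀ a ∈ A, ∀ b ∈ A, a * b = b * a)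
    (hpow : ∀ h : H, ∃ n : ℕ, 1 ≤ n ∧ h ^ n ∈ A)
    (G : Subgroup Q) (hG : G ≠ ⊥)
    (htf : ∀ g ∈ G, g ≠ 1 → ¬IsOfFinOrder g) :
    ∃ G' : Subgroup G, G' ≠ ⊥ ∧ (G'.index = 1 ∨ G'.index = 2) ∧
      (Infinite (Abelianization G') ∨
        ∃ N : Subgroup G', N ≠ ⊥ ∧ N.Normal ∧ ∀ a ∈ N, ∀ b ∈ N, a * b = b * a) := by
  let σ : G →* ℤˣ := (DihedralGroup.reflectionSign 0).comp (ρ.comp G.subtype)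
  have pow_ne_one (g : G) (hg : g ≠ 1) {n : ℕ} (hn : 1 ≤ n) : g ^ n ≠ 1 := fun h =>
    htf g g.2 (by simpa using hg)
      (isOfFinOrder_iff_pow_eq_one.2 ⟨n, hn, by simpa using congrArg Subtype.val h⟩)
  have hne : σ.ker ≠ ⊥ := by
    obtain ⟨g, hg⟩ := Subgroup.ne_bot_iff_exists_ne_one.1 hG
    refine fun h => pow_ne_one g hg one_le_two ?_
    rw [← Subgroup.mem_bot, ← h, MonoidHom.mem_ker, map_pow, Int.units_sq]
  refine ⟨σ.ker, hne, ?_, ?_⟩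
  · rw [Subgroup.index_ker, ← Nat.dvd_prime Nat.prime_two]
    simpa using Subgroup.card_subgroup_dvd_card σ.range
  by_cases hρ : ∀ g : σ.ker, ρ (g : G) = 1
  · right
    obtain ⟨g, hg⟩ := Subgroup.ne_bot_iff_exists_ne_one.1 hne
    let ι : σ.ker →* ρ.ker := (G.subtype.comp σ.ker.subtype).codRestrict ρ.ker hρ
    have hι : Function.Injective ι := fun a b h =>
      Subtype.ext (Subtype.ext (congrArg (fun x : ρ.ker => (x : Q)) h))
    have : (A.map ψ).Normal := Subgroup.Normal.map ‹_› ψ hψ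
    refine ⟨(A.map ψ).comap ι, ?_, inferInstance, ?_⟩
    · obtain ⟨h, hh⟩ := hψ (ι g)
      obtain ⟨n, hn, hnA⟩ := hpow h
      have hmem : g ^ n ∈ (A.map ψ).comap ι := ⟨h ^ n, hnA, by simp [hh]⟩
      intro hbot
      rw [hbot, Subgroup.mem_bot] at hmem
      exact pow_ne_one g (by simpa using hg) hn (by simpa using congrArg Subtype.val hmem)
    · rintro a ⟨x, hx, hxa⟩ b ⟨y, hy, hyb⟩
      apply hι
      rw [map_mul, map_mul, ← hxa, ← hyb, ← map_mul, ← map_mul, hab x hx y hy]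
  · left
    push Not at hρ
    obtain ⟨g, hg⟩ := hρ
    let τ : σ.ker →* (DihedralGroup.reflectionSign 0).ker :=
      (ρ.comp (G.subtype.comp σ.ker.subtype)).codRestrict _ fun x => x.2
    refine Abelianization.infinite_of_not_isOfFinOrder
      (DihedralGroup.rotationAngle.comp τ) (g := g) fun hfin => hg ?_
    have h1 : DihedralGroup.rotationAngle (τ g) = 1 := hfin.eq_one'
    exact congrArg Subtype.val
      (DihedralGroup.rotationAngle_injective (h1.trans (map_one _).symm))
end

section
/- For k ∈ ℤ, let σₖ : ℂ × [0,1] → ℂ × [0,1] be the Dehn twist homeomorphism σₖ(z, s) = (exp(2πiks)·z, s). If σₖ is isotopic rel boundary to the identity map of ℂ × [0,1], then k = 0. -/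
open unitInterval

/-- The Dehn twist `σₖ(z, s) = (exp(2πiks)·z, s)` on `ℂ × [0,1]`. -/
noncomputable def dehnTwist (k : ℤ) : ℂ × I → ℂ × I :=
  fun p => (Complex.exp (2 * Real.pi * Complex.I * (k : ℂ) * ((p.2 : ℝ) : ℂ)) * p.1, p.2)

/-- `f` and `g` are isotopic rel boundary: there is a continuous `H` from `f` to `g`
through homeomorphisms of `ℂ × [0,1]`, fixing `ℂ × {0,1}` pointwise at all times. -/
def IsotopicRelBoundary (f g : ℂ × I → ℂ × I) : Prop :=
  ∃ H : (ℂ × I) × I → ℂ × I,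
    Continuous H ∧
    (∀ p, H (p, 0) = f p) ∧
    (∀ p, H (p, 1) = g p) ∧
    (∀ t : I, ∃ h : (ℂ × I) ≃ₜ (ℂ × I), ∀ p, H (p, t) = h p) ∧
    (∀ (z : ℂ) (s t : I), s = 0 ∨ s = 1 → H ((z, s), t) = (z, s))

open Set Topology

instance unitInterval.locallyPathConnectedSpace : LocallyPathConnectedSpace I :=
  (isQuotientMap_projIcc (h := zero_le_one (α := ℝ))).locallyPathConnectedSpace

/-- If a family of homeomorphisms from a locally compact Hausdorff space to a locally connected
Hausdorff space is jointly continuous, then so is the family of inverses. -/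
theorem Homeomorph.continuous_uncurry_symm {T X Y : Type*} [TopologicalSpace T]
    [TopologicalSpace X] [LocallyCompactSpace X] [T2Space X]
    [TopologicalSpace Y] [LocallyConnectedSpace Y] [T2Space Y]
    (h : T → X ≃ₜ Y) (hc : Continuous fun p : T × X => h p.1 p.2) :
    Continuous fun p : T × Y => (h p.1).symm p.2 := by
  refine continuous_iff_continuousAt.2 fun ⟨t, y⟩ U hU => ?_
  obtain ⟨K, hK, hKU, hKc⟩ := local_compact_nhds hU
  have hxK : (h t).symm y ∈ interior K := mem_interior_iff_mem_nhds.2 hK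
  have hfr : IsCompact (frontier K) :=
    hKc.of_isClosed_subset isClosed_frontier hKc.isClosed.frontier_subset
  have hmiss : ∀ᶠ p : T × Y in 𝓝 (t, y), ∀ z ∈ frontier K, h p.1 z ≠ p.2 := by
    refine hfr.eventually_forall_of_forall_eventually
      (P := fun (p : T × Y) z => h p.1 z ≠ p.2) fun z hz => ?_
    have hne : h t z ≠ y := fun hzy => hz.2 (by rwa [← (h t).symm_apply_apply z, hzy])
    have hcz : Continuous fun q : (T × Y) × X => h q.1.1 q.2 :=
      hc.comp (f := fun q : (T × Y) × X => (q.1.1, q.2)) (by fun_prop)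
    exact (ContinuousAt.ne_iff_eventually_ne (x := ((t, y), z)) hcz.continuousAt
      (by fun_prop : Continuous fun q : (T × Y) × X => q.1.2).continuousAt).1 hne
  obtain ⟨A, hA, B, hB, hAB⟩ := mem_nhds_prod_iff.1 hmiss
  obtain ⟨V, ⟨hVo, hyV, hVc⟩, hVB⟩ := (LocallyConnectedSpace.open_connected_basis y).mem_iff.1 hB
  have hV : ∀ᶠ t' in 𝓝 t, h t' ((h t).symm y) ∈ V := by
    have hct : Continuous fun t' => h t' ((h t).symm y) :=
      hc.comp (f := fun t' => (t', (h t).symm y)) (by fun_prop)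
    exact hct.continuousAt (hVo.mem_nhds (by simpa using hyV))
  refine Filter.mem_map.2 <| Filter.mem_of_superset
    (prod_mem_nhds (Filter.inter_mem hA hV) (hVo.mem_nhds hyV)) ?_
  rintro ⟨t', y'⟩ ⟨⟨ht'A, ht'V⟩, hy'V⟩
  have hsub : (h t').symm '' V ⊆ interior K := by
    have hpre := hVc.isPreconnected.image _ (h t').symm.continuous.continuousOn
    refine hpre.subset_left_of_subset_union isOpen_interior hKc.isClosed.isOpen_compl
      (disjoint_compl_right.mono_left interior_subset) ?_ ⟨_, ⟨_, ht'V, by simp⟩, hxK⟩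
    rintro _ ⟨v, hv, rfl⟩
    by_contra hcon
    simp only [mem_union, mem_compl_iff, not_or, not_not] at hcon
    exact hAB (mk_mem_prod ht'A (hVB hv)) _ ⟨subset_closure hcon.2, hcon.1⟩ (by simp)
  exact hKU (interior_subset (hsub ⟨y', hy'V, rfl⟩))

/-- A path whose exponential is null-homotopic rel endpoints is a loop. -/
theorem eq_of_exp_nullhomotopic {F : I × I → ℂ} (hF : Continuous F) (hF0 : ∀ p, F p ≠ 0)
    {f : I → ℂ} (hf : Continuous f) (hzero : ∀ s, F (0, s) = Complex.exp (f s))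
    (hleft : ∀ t t', F (t, 0) = F (t', 0)) (hright : ∀ t t', F (t, 1) = F (t', 1))
    (hone : ∀ s s', F (1, s) = F (1, s')) : f 0 = f 1 := by
  let cov := Complex.isCoveringMap_exp
  let L := cov.liftHomotopy ⟨fun p => ⟨F p, hF0 p⟩, by fun_prop⟩ ⟨f, hf⟩
    fun s => Subtype.ext (hzero s)
  have hL (p) : (⟨Complex.exp (L p), Complex.exp_ne_zero _⟩ : {z : ℂ // z ≠ 0}) = ⟨F p, hF0 p⟩ :=
    congr_fun (cov.liftHomotopy_lifts _ _ _) p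
  have hL0 (s) : L (0, s) = f s := cov.liftHomotopy_zero _ _ _ s
  have hconst (c : I → I × I) (hc : Continuous c) (hFc : ∀ a b, F (c a) = F (c b)) :
      L (c 0) = L (c 1) :=
    cov.const_of_comp (L.continuous.comp hc)
      (fun a b => by simpa only [hL, Subtype.mk.injEq, Function.comp] using hFc a b) 0 1
  calc f 0 = L (0, 0) := (hL0 0).symm
    _ = L (1, 0) := hconst (fun t => (t, 0)) (by fun_prop) hleft
    _ = L (1, 1) := hconst (fun s => (1, s)) (by fun_prop) hone
    _ = L (0, 1) := (hconst (fun t => (t, 1)) (by fun_prop) hright).symm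
    _ = f 1 := hL0 1

/-- If the Dehn twist `σₖ` is isotopic rel boundary to the identity, then `k = 0`. -/
theorem dehnTwist_isotopic_id_iff_zero (k : ℤ)
    (h : IsotopicRelBoundary (dehnTwist k) id) : k = 0 := by
  obtain ⟨H, hH, hH0, hH1, hhomeo, hbd⟩ := h
  choose e he using hhomeo
  have hinv : Continuous fun p : I × (ℂ × I) => (e p.1).symm p.2 :=
    Homeomorph.continuous_uncurry_symm e (by
      simp only [← he]
      exact hH.comp (f := fun p : I × (ℂ × I) => (p.2, p.1)) (by fun_prop))
  -- A vertical arc `{R} × [0,1]` disjoint from the images of the core `{0} × [0,1]` at all times.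
  obtain ⟨R, hR0, hR⟩ : ∃ R : ℝ, 0 < R ∧ ∀ s t : I, (H ((0, s), t)).1 ≠ R := by
    have hcore : Continuous fun p : I × I => ‖(H ((0, p.1), p.2)).1‖ :=
      (hH.comp (f := fun p : I × I => (((0 : ℂ), p.1), p.2)) (by fun_prop)).fst.norm
    obtain ⟨C, hC⟩ := (isCompact_range hcore).bddAbove
    refine ⟨max C 0 + 1, by positivity, fun s t hst => ?_⟩
    have hle : ‖(H ((0, s), t)).1‖ ≤ C := hC ⟨(s, t), rfl⟩
    rw [hst, Complex.norm_real, Real.norm_of_nonneg (by positivity)] at hle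
    linarith [le_max_left C 0]
  have hRC : (R : ℂ) ≠ 0 := by exact_mod_cast hR0.ne'
  have hfix (t s : I) (hs : s = 0 ∨ s = 1) : (e t).symm (R, s) = ((R : ℂ), s) := by
    rw [Homeomorph.symm_apply_eq, ← he, hbd _ _ _ hs]
  have key := eq_of_exp_nullhomotopic
    (F := fun p : I × I => ((e p.1).symm (R, p.2)).1)
    (f := fun s => Complex.log R - 2 * Real.pi * Complex.I * (k : ℂ) * ((s : ℝ) : ℂ))
    (hinv.comp (f := fun p : I × I => (p.1, ((R : ℂ), p.2))) (by fun_prop)).fst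
    (fun p hp => hR ((e p.1).symm (R, p.2)).2 p.1 (by
      rw [he, ← hp, Prod.mk.eta, Homeomorph.apply_symm_apply]))
    (by fun_prop)
    (fun s => by
      have hsymm : (e 0).symm (R, s) =
          (Complex.exp (Complex.log R - 2 * Real.pi * Complex.I * (k : ℂ) * ((s : ℝ) : ℂ)), s) := by
        rw [Homeomorph.symm_apply_eq, ← he, hH0, dehnTwist, ← Complex.exp_add,
          add_sub_cancel, Complex.exp_log hRC]
      simp only [hsymm])
    (fun t t' => by simp only [hfix _ 0 (.inl rfl)])
    (fun t t' => by simp only [hfix _ 1 (.inr rfl)])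
    (fun s s' => by
      have hsymm (u : I) : (e 1).symm (R, u) = ((R : ℂ), u) := by
        rw [Homeomorph.symm_apply_eq, ← he, hH1, id]
      simp only [hsymm])
  simpa [Real.pi_ne_zero, Complex.I_ne_zero, eq_comm (a := Complex.log R)] using key
end
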